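/- Let C = ⊕_{d∈ℤ} C_d be a finite-dimensional ℤ-graded vector space over ℚ (so only finitely many C_d are nonzero), and let ∂̂ = Σ_{k≥0} ∂_k be a linear map C → C with ∂̂ ∘ ∂̂ = 0, where each ∂_k is a linear map of degree −1+2k (the sum is automatically finite). Then there exists a finite decreasing chain of graded subspaces C = F_{a} ⊇ F_{a+1} ⊇ ⋯ ⊇ F_{b} = 0, each invariant under ∂̂, such that for every ℓ the homology of the quotient complex (F_ℓ/F_{ℓ+1}, induced by ∂̂) is concentrated in degree ℓ+1 and is isomorphic there to H_{ℓ+1}(C, ∂₀) := ker(∂₀ : C_{ℓ+1} → C_ℓ)/∂₀(C_{ℓ+2}). -/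

import Mathlib

/-!
Let `δ` be a differential whose component `δ₀` of degree `-1` is its only component of nonpositive
degree, and let `G ℓ` be the part of `C` of degree greater than `ℓ`. The filtration consists of the
subcomplexes `F ℓ = G ℓ + δ (G ℓ)`, so its invariance under `δ` is automatic. As `δ` and `δ₀` agree
on `C (ℓ + 1)` modulo `G (ℓ + 1)`, one has `F ℓ = G ℓ + δ₀ (C (ℓ + 1))`, which is graded.

Modulo `F (ℓ + 1)` and boundaries, `F ℓ` is spanned by `C (ℓ + 1)`. An element `x` of `C (ℓ + 1)` is
a cycle modulo `F (ℓ + 1)` if and only if `δ₀ x` lies in `C ℓ ∩ F (ℓ + 1) = 0`, and it is a boundary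
modulo `F (ℓ + 1)` if and only if it lies in `δ₀ (C (ℓ + 2))`.
-/

namespace GradedDifferential

section Above

open Filter

variable {ι α : Type*} [CompleteLattice α] {C : ι → α}

/-- The supremum of the members of the family `C` with index greater than `i`: for a graded module,
the part of degree greater than `i`. -/
def above [LT ι] (C : ι → α) (i : ι) : α :=
  ⨆ j, ⨆ _ : i < j, C j

theorem le_above [LT ι] {i j : ι} (h : i < j) : C j ≤ above C i :=
  le_iSup₂_of_le j h le_rfl

theorem above_le_iff [LT ι] {i : ι} {a : α} : above C i ≤ a ↔ ∀ j, i < j → C j ≤ a :=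
  iSup₂_le_iff

theorem above_antitone [Preorder ι] : Antitone (above C) :=
  fun _ _ h => above_le_iff.2 fun _ hj => le_above (h.trans_lt hj)

theorem above_eq_sup [LinearOrder ι] [Add ι] [One ι] [SuccAddOrder ι] [NoMaxOrder ι] (i : ι) :
    above C i = C (i + 1) ⊔ above C (i + 1) := by
  have hi : i < i + 1 := Order.lt_add_one_iff.2 le_rfl
  refine le_antisymm (above_le_iff.2 fun j hj => ?_)
    (sup_le (le_above hi) (above_antitone hi.le))
  rcases (Order.add_one_le_of_lt hj).eq_or_lt with rfl | h
  · exact le_sup_left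
  · exact (le_above h).trans le_sup_right

theorem disjoint_above [Preorder ι] (hC : iSupIndep C) {i j : ι} (h : i ≤ j) :
    Disjoint (C i) (above C j) :=
  (hC i).mono_right (above_le_iff.2 fun k hk => le_iSup₂_of_le k (h.trans_lt hk).ne' le_rfl)

theorem eventually_above_eq_bot [LinearOrder ι] [Nonempty ι] (hfin : {i | C i ≠ ⊥}.Finite) :
    ∀ᶠ i in atTop, above C i = ⊥ := by
  obtain ⟨m, hm⟩ := hfin.bddAbove
  filter_upwards [eventually_ge_atTop m] with i hi
  refine le_bot_iff.1 (above_le_iff.2 fun j hj => le_bot_iff.2 ?_)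
  by_contra hne
  exact ((hm hne).trans hi).not_gt hj

theorem eventually_above_eq_iSup [LinearOrder ι] [Nonempty ι] [NoMinOrder ι]
    (hfin : {i | C i ≠ ⊥}.Finite) : ∀ᶠ i in atBot, above C i = ⨆ j, C j := by
  obtain ⟨m, hm⟩ := hfin.bddBelow
  filter_upwards [eventually_lt_atBot m] with i hi
  refine le_antisymm (above_le_iff.2 fun j _ => le_iSup C j) (iSup_le fun j => ?_)
  by_cases hj : C j = ⊥
  · exact hj ▸ bot_le
  · exact le_above (hi.trans_le (hm hj))

end Above

section LinearMaps

variable {R V W : Type*} [Ring R] [AddCommGroup V] [Module R V] [AddCommGroup W] [Module R W]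

theorem map_sup_eq_map_sup_of_sub_mem {f g : V →ₗ[R] W} {p : Submodule R V} {q : Submodule R W}
    (h : ∀ x ∈ p, f x - g x ∈ q) : p.map f ⊔ q = p.map g ⊔ q := by
  refine le_antisymm (sup_le ?_ le_sup_right) (sup_le ?_ le_sup_right) <;>
    refine Submodule.map_le_iff_le_comap.2 fun x hx => ?_
  · rw [Submodule.mem_comap, ← add_sub_cancel (g x) (f x)]
    exact Submodule.add_mem_sup (Submodule.mem_map_of_mem hx) (h x hx)
  · rw [Submodule.mem_comap, ← sub_sub_cancel (f x) (g x)]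
    exact sub_mem (Submodule.mem_sup_left (Submodule.mem_map_of_mem hx))
      (Submodule.mem_sup_right (h x hx))

/-- The second isomorphism theorem, for `Z / B` where `Z` is the sum of `Z₀` and `B`. The quotient
on the right is by the trace of `B₀` on `Z₀`. -/
noncomputable def quotientEquivOfEqSup {Z Z₀ B B₀ : Submodule R V} (hZ : Z = Z₀ ⊔ B)
    (hB : Z₀ ⊓ B = Z₀ ⊓ B₀) : (Z ⧸ B.comap Z.subtype) ≃ₗ[R] Z₀ ⧸ B₀.comap Z₀.subtype := by
  subst hZ
  refine (LinearMap.quotientInfEquivSupQuotient Z₀ B).symm ≪≫ₗ Submodule.quotEquivOfEq _ _ ?_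
  rw [← Submodule.comap_inf, hB, Submodule.comap_inf, Submodule.comap_subtype_self, top_inf_eq]

theorem finite_support_of_forall_mem {ι κ : Type*} {C : ι → Submodule R V}
    (htop : ⨆ i, C i = ⊤) (hfin : {i | C i ≠ ⊥}.Finite) {D : κ → V →ₗ[R] V} {φ : ι → κ → ι}
    (hφ : ∀ i, (φ i).Injective) (hD : ∀ k i, ∀ x ∈ C i, D k x ∈ C (φ i k)) :
    D.support.Finite := by
  refine (hfin.biUnion fun i _ => hfin.preimage (hφ i).injOn).subset fun k hk => ?_
  contrapose! hk
  simp only [Set.mem_iUnion, Set.mem_preimage, Set.mem_ofPred_eq, not_exists, not_not] at hk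
  rw [Function.notMem_support, ← LinearMap.ker_eq_top, eq_top_iff, ← htop]
  refine iSup_le fun i x hx => LinearMap.mem_ker.2 ?_
  by_cases hi : C i = ⊥
  · rw [(Submodule.eq_bot_iff _).1 hi x hx, map_zero]
  · exact (Submodule.eq_bot_iff _).1 (hk i hi) _ (hD k i x hx)

theorem finsum_sub_apply_mem {κ : Type*} {D : κ → V →ₗ[R] W} (hD : D.support.Finite) {k : κ}
    {p : Submodule R W} {x : V} (h : ∀ j ≠ k, D j x ∈ p) : (∑ᶠ j, D j) x - D k x ∈ p := by
  classical
  have hsupp : D.support ⊆ (insert k hD.toFinset : Finset κ) := by simp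
  rw [finsum_eq_sum_of_support_subset D hsupp,
    ← Finset.add_sum_erase _ _ (Finset.mem_insert_self k _), LinearMap.add_apply,
    add_sub_cancel_left, LinearMap.sum_apply]
  exact sum_mem fun j hj => h j (Finset.ne_of_mem_erase hj)

end LinearMaps

variable {R V : Type*} [Ring R] [AddCommGroup V] [Module R V] {δ δ₀ : V →ₗ[R] V}

section SubcomplexSpan

/-- The subcomplex generated by a submodule `p` under a differential `δ`. -/
def subcomplexSpan (δ : V →ₗ[R] V) (p : Submodule R V) : Submodule R V :=
  p ⊔ p.map δ

theorem le_subcomplexSpan (p : Submodule R V) : p ≤ subcomplexSpan δ p :=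
  le_sup_left

theorem subcomplexSpan_mono : Monotone (subcomplexSpan δ) :=
  fun _ _ h => sup_le_sup h (Submodule.map_mono h)

theorem subcomplexSpan_sup (p q : Submodule R V) :
    subcomplexSpan δ (p ⊔ q) = p ⊔ (p.map δ ⊔ subcomplexSpan δ q) := by
  simp only [subcomplexSpan, Submodule.map_sup, sup_assoc, sup_left_comm]

theorem map_subcomplexSpan (hδ : δ ∘ₗ δ = 0) (p : Submodule R V) :
    (subcomplexSpan δ p).map δ = p.map δ := by
  rw [subcomplexSpan, Submodule.map_sup, ← Submodule.map_comp, hδ, Submodule.map_zero, sup_bot_eq]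

theorem map_subcomplexSpan_le (hδ : δ ∘ₗ δ = 0) (p : Submodule R V) :
    (subcomplexSpan δ p).map δ ≤ subcomplexSpan δ p :=
  (map_subcomplexSpan hδ p).trans_le le_sup_right

theorem boundaries_subcomplexSpan_sup (hδ : δ ∘ₗ δ = 0) (p q : Submodule R V) :
    (subcomplexSpan δ (p ⊔ q)).map δ ⊔ subcomplexSpan δ q = p.map δ ⊔ subcomplexSpan δ q := by
  rw [map_subcomplexSpan hδ, Submodule.map_sup, sup_assoc,
    sup_eq_right.2 (show q.map δ ≤ subcomplexSpan δ q from le_sup_right)]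

theorem cycles_subcomplexSpan_sup (hδ : δ ∘ₗ δ = 0) (p q : Submodule R V) :
    subcomplexSpan δ (p ⊔ q) ⊓ (subcomplexSpan δ q).comap δ =
      (p ⊓ (subcomplexSpan δ q).comap δ) ⊔ (p.map δ ⊔ subcomplexSpan δ q) := by
  have hB : p.map δ ⊔ subcomplexSpan δ q ≤ (subcomplexSpan δ q).comap δ := by
    rw [← Submodule.map_le_iff_le_comap, Submodule.map_sup, ← Submodule.map_comp, hδ,
      Submodule.map_zero, bot_sup_eq]
    exact map_subcomplexSpan_le hδ q
  rw [subcomplexSpan_sup, sup_comm, sup_inf_assoc_of_le p hB, sup_comm]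

end SubcomplexSpan

variable {C : ℤ → Submodule R V}

/-- `δ₀` is homogeneous of degree `-1` for the grading `C`, and `δ - δ₀` strictly raises degrees. -/
structure IsLeadingPart (C : ℤ → Submodule R V) (δ₀ δ : V →ₗ[R] V) : Prop where
  apply_mem : ∀ d, ∀ x ∈ C d, δ₀ x ∈ C (d - 1)
  sub_apply_mem : ∀ d, ∀ x ∈ C d, δ x - δ₀ x ∈ above C d

/-- The subcomplex generated by the elements of degree greater than `ℓ`. By
`IsLeadingPart.filtration_eq` it has components `C d` for `d > ℓ`, `δ₀ (C (ℓ + 1))` in degree `ℓ`,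
and `0` in degrees less than `ℓ`. -/
def filtration (C : ℤ → Submodule R V) (δ : V →ₗ[R] V) (ℓ : ℤ) : Submodule R V :=
  subcomplexSpan δ (above C ℓ)

theorem above_le_filtration (ℓ : ℤ) : above C ℓ ≤ filtration C δ ℓ :=
  le_subcomplexSpan _

theorem filtration_eq_subcomplexSpan_sup (ℓ : ℤ) :
    filtration C δ ℓ = subcomplexSpan δ (C (ℓ + 1) ⊔ above C (ℓ + 1)) := by
  rw [filtration, above_eq_sup]

namespace IsLeadingPart

protected theorem finsum {D : ℕ → V →ₗ[R] V} (htop : ⨆ d, C d = ⊤)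
    (hfin : {d | C d ≠ ⊥}.Finite)
    (hdeg : ∀ (k : ℕ) (d : ℤ), ∀ x ∈ C d, D k x ∈ C (d - 1 + 2 * (k : ℤ))) :
    IsLeadingPart C (D 0) (∑ᶠ k, D k) where
  apply_mem d x hx := by simpa using hdeg 0 d x hx
  sub_apply_mem d x hx := by
    have hD : D.support.Finite :=
      finite_support_of_forall_mem htop hfin (fun d k l hkl => by lia) hdeg
    exact finsum_sub_apply_mem hD fun k hk => le_above (C := C) (by lia) (hdeg k d x hx)

variable (h : IsLeadingPart C δ₀ δ)
include h

theorem map_le (d : ℤ) : (C (d + 1)).map δ₀ ≤ C d :=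
  Submodule.map_le_iff_le_comap.2 fun x hx => by simpa using h.apply_mem _ x hx

theorem map_above_le (ℓ : ℤ) : (above C (ℓ + 1)).map δ ≤ above C ℓ := by
  refine Submodule.map_le_iff_le_comap.2 (above_le_iff.2 fun d hd x hx => ?_)
  rw [Submodule.mem_comap, ← add_sub_cancel (δ₀ x) (δ x)]
  exact add_mem (le_above (C := C) (by lia) (h.apply_mem d x hx))
    (above_antitone (C := C) (by lia) (h.sub_apply_mem d x hx))

theorem filtration_eq (ℓ : ℤ) : filtration C δ ℓ = above C ℓ ⊔ (C (ℓ + 1)).map δ₀ := by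
  have hsub : ∀ x ∈ C (ℓ + 1), δ x - δ₀ x ∈ above C ℓ := fun x hx =>
    above_antitone (C := C) (by lia) (h.sub_apply_mem _ x hx)
  calc
    filtration C δ ℓ = above C ℓ ⊔ ((C (ℓ + 1)).map δ ⊔ (above C (ℓ + 1)).map δ) := by
      rw [← Submodule.map_sup, ← above_eq_sup, filtration, subcomplexSpan]
    _ = (C (ℓ + 1)).map δ ⊔ above C ℓ := by
      rw [sup_left_comm, sup_eq_left.2 (h.map_above_le ℓ)]
    _ = above C ℓ ⊔ (C (ℓ + 1)).map δ₀ := by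
      rw [map_sup_eq_map_sup_of_sub_mem hsub, sup_comm]

theorem filtration_succ_le_above (ℓ : ℤ) : filtration C δ (ℓ + 1) ≤ above C ℓ :=
  sup_le (above_antitone (by lia)) (h.map_above_le ℓ)

theorem filtration_eq_iSup_inf (ℓ : ℤ) :
    filtration C δ ℓ = ⨆ d, filtration C δ ℓ ⊓ C d := by
  refine le_antisymm ?_ (iSup_le fun _ => inf_le_left)
  conv_lhs => rw [h.filtration_eq]
  refine sup_le (above_le_iff.2 fun d hd => ?_) ?_
  · exact le_iSup_of_le d (le_inf ((le_above hd).trans (above_le_filtration ℓ)) le_rfl)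
  · exact le_iSup_of_le ℓ (le_inf (le_sup_right.trans (h.filtration_eq ℓ).ge) (h.map_le ℓ))

theorem boundaries_filtration (hδ : δ ∘ₗ δ = 0) (ℓ : ℤ) :
    (filtration C δ ℓ).map δ ⊔ filtration C δ (ℓ + 1) =
      (C (ℓ + 1)).map δ₀ ⊔ filtration C δ (ℓ + 1) := by
  rw [filtration_eq_subcomplexSpan_sup, filtration, boundaries_subcomplexSpan_sup hδ]
  exact map_sup_eq_map_sup_of_sub_mem fun x hx => above_le_filtration _ (h.sub_apply_mem _ x hx)

theorem inf_comap_filtration (hC : iSupIndep C) (ℓ : ℤ) :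
    C (ℓ + 1) ⊓ (filtration C δ (ℓ + 1)).comap δ = C (ℓ + 1) ⊓ LinearMap.ker δ₀ := by
  have hdisj : Disjoint (C ℓ) (filtration C δ (ℓ + 1)) :=
    (disjoint_above hC le_rfl).mono_right (h.filtration_succ_le_above ℓ)
  ext x
  refine and_congr_right fun hx => ?_
  have hδ₀x : δ₀ x ∈ C ℓ := h.map_le ℓ (Submodule.mem_map_of_mem hx)
  have hsub : δ x - δ₀ x ∈ filtration C δ (ℓ + 1) := above_le_filtration _ (h.sub_apply_mem _ x hx)
  calc
    δ x ∈ filtration C δ (ℓ + 1) ↔ δ₀ x ∈ filtration C δ (ℓ + 1) := by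
      simpa only [sub_add_cancel] using add_mem_cancel_left (y := δ₀ x) hsub
    _ ↔ δ₀ x = 0 :=
      ⟨Submodule.disjoint_def.1 hdisj _ hδ₀x, fun h0 => h0 ▸ zero_mem _⟩

theorem cycles_filtration (hC : iSupIndep C) (hδ : δ ∘ₗ δ = 0) (ℓ : ℤ) :
    filtration C δ ℓ ⊓ (filtration C δ (ℓ + 1)).comap δ =
      (C (ℓ + 1) ⊓ LinearMap.ker δ₀) ⊔
        ((filtration C δ ℓ).map δ ⊔ filtration C δ (ℓ + 1)) := by
  rw [← h.inf_comap_filtration hC, filtration_eq_subcomplexSpan_sup ℓ, filtration,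
    cycles_subcomplexSpan_sup hδ, boundaries_subcomplexSpan_sup hδ]

theorem filtration_inf_le_of_ne (hC : iSupIndep C) {ℓ d : ℤ} (hd : d ≠ ℓ + 1) :
    filtration C δ ℓ ⊓ C d ≤ (C (ℓ + 1)).map δ₀ ⊔ filtration C δ (ℓ + 1) := by
  rcases lt_trichotomy d ℓ with hlt | rfl | hgt
  · have hle : filtration C δ ℓ ≤ above C d := by
      rw [h.filtration_eq]
      exact sup_le (above_antitone hlt.le) ((h.map_le ℓ).trans (le_above hlt))
    exact ((disjoint_above hC le_rfl).symm.mono_left hle).le_bot.trans bot_le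
  · rw [h.filtration_eq, sup_comm, sup_inf_assoc_of_le _ (h.map_le d),
      (disjoint_above hC le_rfl).symm.eq_bot, sup_bot_eq]
    exact le_sup_left
  · exact inf_le_right.trans
      (((le_above (by lia)).trans (above_le_filtration _)).trans le_sup_right)

theorem inf_boundaries_filtration (hC : iSupIndep C) (hδ : δ ∘ₗ δ = 0) (ℓ : ℤ) :
    C (ℓ + 1) ⊓ ((filtration C δ ℓ).map δ ⊔ filtration C δ (ℓ + 1)) =
      (C (ℓ + 2)).map δ₀ := by
  have hle : (C (ℓ + 1)).map δ₀ ⊔ above C (ℓ + 1) ≤ ⨆ d, ⨆ _ : d ≠ ℓ + 1, C d :=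
    sup_le ((h.map_le ℓ).trans (le_iSup₂_of_le ℓ (by lia) le_rfl))
      (above_le_iff.2 fun d hd => le_iSup₂_of_le d hd.ne' le_rfl)
  have hdisj : Disjoint ((C (ℓ + 1)).map δ₀ ⊔ above C (ℓ + 1)) (C (ℓ + 1)) :=
    (hC (ℓ + 1)).symm.mono_left hle
  have hmap : (C (ℓ + 2)).map δ₀ ≤ C (ℓ + 1) := by
    simpa only [add_assoc, one_add_one_eq_two] using h.map_le (ℓ + 1)
  calc
    C (ℓ + 1) ⊓ ((filtration C δ ℓ).map δ ⊔ filtration C δ (ℓ + 1))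
    _ = ((C (ℓ + 2)).map δ₀ ⊔ ((C (ℓ + 1)).map δ₀ ⊔ above C (ℓ + 1))) ⊓ C (ℓ + 1) := by
      rw [h.boundaries_filtration hδ, h.filtration_eq, add_assoc, one_add_one_eq_two, ← sup_assoc,
        inf_comm, sup_comm ((C (ℓ + 2)).map δ₀)]
    _ = (C (ℓ + 2)).map δ₀ ⊔ ((C (ℓ + 1)).map δ₀ ⊔ above C (ℓ + 1)) ⊓ C (ℓ + 1) :=
      sup_inf_assoc_of_le _ hmap
    _ = (C (ℓ + 2)).map δ₀ := by rw [hdisj.eq_bot, sup_bot_eq]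

end IsLeadingPart

end GradedDifferential

open GradedDifferential Filter in
theorem stmt_4_general {R V : Type*} [Ring R] [AddCommGroup V] [Module R V]
    {C : ℤ → Submodule R V} (hC : DirectSum.IsInternal C) (hfin : {d | C d ≠ ⊥}.Finite)
    {δ₀ δ : V →ₗ[R] V} (h : IsLeadingPart C δ₀ δ) (hδ : δ ∘ₗ δ = 0) :
    ∃ (a b : ℤ) (F : ℤ → Submodule R V),
      a ≤ b ∧ F a = ⊤ ∧ F b = ⊥ ∧
      (∀ ℓ, F (ℓ + 1) ≤ F ℓ) ∧
      (∀ ℓ, F ℓ = ⨆ d, F ℓ ⊓ C d) ∧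
      (∀ ℓ, ∀ x ∈ F ℓ, δ x ∈ F ℓ) ∧
      ∀ ℓ,
        (F ℓ ⊓ (F (ℓ + 1)).comap δ) ⊓ ((⨆ d, ⨆ _ : d ≠ ℓ + 1, F ℓ ⊓ C d) ⊔ F (ℓ + 1)) ≤
          (F ℓ).map δ ⊔ F (ℓ + 1) ∧
        Nonempty
          ((↥(F ℓ ⊓ (F (ℓ + 1)).comap δ) ⧸
              ((F ℓ).map δ ⊔ F (ℓ + 1)).comap (F ℓ ⊓ (F (ℓ + 1)).comap δ).subtype) ≃ₗ[R]
            (↥(C (ℓ + 1) ⊓ LinearMap.ker δ₀) ⧸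
              ((C (ℓ + 2)).map δ₀).comap (C (ℓ + 1) ⊓ LinearMap.ker δ₀).subtype)) := by
  have hind := hC.submodule_iSupIndep
  obtain ⟨a, ha⟩ := (eventually_above_eq_iSup hfin).exists
  obtain ⟨b, hb, hab⟩ :=
    ((eventually_above_eq_bot hfin).and (eventually_ge_atTop a)).exists
  refine ⟨a, b, filtration C δ, hab, ?_, ?_,
    fun ℓ => subcomplexSpan_mono (above_antitone (by lia)), h.filtration_eq_iSup_inf,
    fun ℓ => Submodule.map_le_iff_le_comap.1 (map_subcomplexSpan_le hδ _), fun ℓ => ⟨?_, ?_⟩⟩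
  · rw [← top_le_iff, ← hC.submodule_iSup_eq_top, ← ha]
    exact above_le_filtration a
  · rw [filtration, hb, subcomplexSpan, Submodule.map_bot, sup_bot_eq]
  · rw [h.boundaries_filtration hδ]
    exact inf_le_right.trans
      (sup_le (iSup₂_le fun d hd => h.filtration_inf_le_of_ne hind hd) le_sup_right)
  · refine ⟨quotientEquivOfEqSup (h.cycles_filtration hind hδ ℓ) ?_⟩
    rw [← h.inf_boundaries_filtration hind hδ, inf_inf_inf_comm, inf_idem, inf_assoc]

/-- Filtration formulation of Lemma 5.4: there is a finite decreasing chain of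
`∂̂`-invariant graded subspaces `⊤ = F a ⊇ ⋯ ⊇ F b = ⊥` such that the homology of
each quotient complex `F ℓ / F (ℓ+1)` is concentrated in degree `ℓ+1` and is
isomorphic there to `H_{ℓ+1}(C, ∂₀)`. -/
theorem stmt_4 {V : Type*} [AddCommGroup V] [Module ℚ V] [FiniteDimensional ℚ V]
    (C : ℤ → Submodule ℚ V) (hC : DirectSum.IsInternal C)
    (D : ℕ → V →ₗ[ℚ] V)
    (hdeg : ∀ (k : ℕ) (d : ℤ), ∀ x ∈ C d, D k x ∈ C (d - 1 + 2 * (k : ℤ)))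
    (Dhat : V →ₗ[ℚ] V) (hDhat : Dhat = ∑ᶠ k, D k)
    (hDD : Dhat ∘ₗ Dhat = 0) :
    ∃ (a b : ℤ) (F : ℤ → Submodule ℚ V),
      a ≤ b ∧ F a = ⊤ ∧ F b = ⊥ ∧
      (∀ ℓ : ℤ, F (ℓ + 1) ≤ F ℓ) ∧
      -- each `F ℓ` is a graded subspace
      (∀ ℓ : ℤ, F ℓ = ⨆ d : ℤ, F ℓ ⊓ C d) ∧
      -- each `F ℓ` is invariant under `∂̂`
      (∀ ℓ : ℤ, ∀ x ∈ F ℓ, Dhat x ∈ F ℓ) ∧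
      (∀ ℓ : ℤ,
        -- homology of the quotient complex `F ℓ / F (ℓ+1)` is concentrated in
        -- degree `ℓ+1`: any cycle lying in the sum of the degree-`d` parts with
        -- `d ≠ ℓ+1` is a boundary
        (((F ℓ ⊓ (F (ℓ + 1)).comap Dhat) ⊓
            ((⨆ d : ℤ, ⨆ _ : d ≠ ℓ + 1, F ℓ ⊓ C d) ⊔ F (ℓ + 1)))
          ≤ (F ℓ).map Dhat ⊔ F (ℓ + 1)) ∧
        -- and the homology of the quotient complex is isomorphic to
        -- `H_{ℓ+1}(C, ∂₀) = ker(∂₀ : C_{ℓ+1} → C_ℓ)/∂₀(C_{ℓ+2})`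
        Nonempty
          ((↥(F ℓ ⊓ (F (ℓ + 1)).comap Dhat) ⧸
              (((F ℓ).map Dhat ⊔ F (ℓ + 1)).comap
                (F ℓ ⊓ (F (ℓ + 1)).comap Dhat).subtype)) ≃ₗ[ℚ]
            (↥(C (ℓ + 1) ⊓ LinearMap.ker (D 0)) ⧸
              (((C (ℓ + 2)).map (D 0)).comap
                (C (ℓ + 1) ⊓ LinearMap.ker (D 0)).subtype)))) := by
  have hfin := WellFoundedGT.finite_ne_bot_of_iSupIndep hC.submodule_iSupIndep
  exact stmt_4_general hC hfin (hDhat ▸ .finsum hC.submodule_iSup_eq_top hfin hdeg) hDD
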